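/- Let d ≥ 2, β > 0, and let p be the probability mass function on ℤ proportional to e^{−β|j|} (the SOS increment law). Let H be the almost-sure limit of the spherical averages H_r of the free height field with increment law p on the rooted Cayley tree of order d. Then for every A with 0 < A < (d+1)β there exists B = B(A) < ∞ such that P(|H| ≥ s) ≤ B e^{−As} for all real s ≥ 0. -/

import Mathlib

open MeasureTheory ProbabilityTheory Filter Finset Topology

noncomputable section

/-- A non-root vertex of the rooted Cayley tree of order `d`: the first step from the
root is one of `d+1` children, every further step one of `d` children. -/
abbrev Vertex (d : ℕ) : Type := Fin (d + 1) × List (Fin d)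

/-- depth of a non-root vertex -/
def vdepth {d : ℕ} (v : Vertex d) : ℕ := v.2.length + 1

/-- the sphere `W_r` of radius `r ≥ 1`: all vertices of depth `r` -/
def sphereW (d r : ℕ) : Finset (Vertex d) :=
  (Finset.univ : Finset (Fin (d + 1) × (Fin (r - 1) → Fin d))).image
    (fun x => (x.1, List.ofFn x.2))

/-- height at `v`: sum of the increments along the path from the root to `v`
(the prefixes of length `0,…,|v.2|` of the step list of `v` enumerate that path). -/
def heightAt {d : ℕ} {Ω : Type*} (Y : Vertex d → Ω → ℝ) (v : Vertex d) (ω : Ω) : ℝ :=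
  ∑ k ∈ Finset.range (v.2.length + 1), Y (v.1, v.2.take k) ω

/-- spherical average `H_r` of the heights at depth `r` -/
def sphAvg (d : ℕ) {Ω : Type*} (Y : Vertex d → Ω → ℝ) (r : ℕ) (ω : Ω) : ℝ :=
  (((d + 1) * d ^ (r - 1) : ℕ) : ℝ)⁻¹ * ∑ v ∈ sphereW d r, heightAt Y v ω

/-!
The spherical average `H_n` is a sum of independent terms `|W_k|⁻¹ Y_v`, one for each vertex `v` of
depth `k ≤ n`. Every weight `|W_k|⁻¹` is at most `1 / (d + 1)`, so for `|t| < (d + 1) β` each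
`t |W_k|⁻¹` stays in a compact subinterval of `(-β, β)`, on which the moment generating function of
a centred increment is at most `exp (C u²)`. The squared weights sum to `∑ |W_k|⁻¹ ≤ 2`, whence
`E exp (t H_n)` is bounded uniformly in `n`. By Fatou's lemma `exp (t H)` is integrable for these
`t`, and Chernoff's bound for `|H|` at `t = A` gives the tail estimate.
-/

section ExponentialMoments

variable {Ω : Type*} {mΩ : MeasurableSpace Ω} {μ : Measure Ω}

theorem exists_mgf_le_exp_mul_sq_of_nonneg [IsProbabilityMeasure μ] {X : Ω → ℝ}
    (hmean : ∫ ω, X ω ∂μ = 0) {b : ℝ}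
    (hb : Set.Icc 0 b ⊆ interior (integrableExpSet X μ)) :
    ∃ C, ∀ t ∈ Set.Icc 0 b, mgf X μ t ≤ Real.exp (C * t ^ 2) := by
  have hcont : ContinuousOn (iteratedDeriv 2 (cgf X μ)) (Set.Icc 0 b) := by
    rw [iteratedDeriv_eq_iterate]
    exact (analyticOnNhd_cgf.iterated_deriv 2).continuousOn.mono hb
  obtain ⟨M, hM⟩ := isCompact_Icc.exists_bound_of_continuousOn hcont
  refine ⟨M / 2, fun t ht => ?_⟩
  rcases ht.1.eq_or_lt with rfl | htpos
  · simp
  · obtain ⟨u, hu, hcgf⟩ := exists_cgf_eq_iteratedDeriv_two_cgf_mul htpos hmean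
      ((Set.Icc_subset_Icc_right ht.2).trans hb)
    have hu' : iteratedDeriv 2 (cgf X μ) u ≤ M :=
      (Real.le_norm_self _).trans (hM u ⟨hu.1.le, hu.2.le.trans ht.2⟩)
    have hint : t ∈ integrableExpSet X μ := interior_subset (hb ht)
    rw [← exp_cgf hint, Real.exp_le_exp, hcgf]
    nlinarith [sq_nonneg t]

theorem exists_mgf_le_exp_mul_sq [IsProbabilityMeasure μ] {X : Ω → ℝ}
    (hmean : ∫ ω, X ω ∂μ = 0) {a b : ℝ} (hba : b < a)
    (ha : Set.Ioo (-a) a ⊆ integrableExpSet X μ) :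
    ∃ C, ∀ t, |t| ≤ b → mgf X μ t ≤ Real.exp (C * t ^ 2) := by
  have hneg : Set.Ioo (-a) a ⊆ integrableExpSet (-X) μ := fun t ht => by
    simpa [integrableExpSet] using ha ⟨neg_lt_neg ht.2, neg_lt.1 ht.1⟩
  have hIcc : Set.Icc 0 b ⊆ Set.Ioo (-a) a := fun t ht =>
    ⟨by linarith [ht.1, ht.2], ht.2.trans_lt hba⟩
  obtain ⟨C₁, hC₁⟩ := exists_mgf_le_exp_mul_sq_of_nonneg hmean
    (hIcc.trans (interior_maximal ha isOpen_Ioo))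
  obtain ⟨C₂, hC₂⟩ := exists_mgf_le_exp_mul_sq_of_nonneg (X := -X)
    (by simp [integral_neg, hmean]) (hIcc.trans (interior_maximal hneg isOpen_Ioo))
  refine ⟨max C₁ C₂, fun t ht => ?_⟩
  rcases le_total 0 t with h0 | h0
  · refine (hC₁ t ⟨h0, (le_abs_self t).trans ht⟩).trans ?_
    gcongr
    exact le_max_left C₁ C₂
  · have h := hC₂ (-t) ⟨neg_nonneg.2 h0, (neg_le_abs t).trans ht⟩
    rw [mgf_neg, neg_neg, neg_sq] at h
    refine h.trans ?_
    gcongr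
    exact le_max_right C₁ C₂

theorem mgf_sum_mul {ι : Type*} {X : ι → Ω → ℝ} (hindep : iIndepFun X μ)
    (hX : ∀ i, AEMeasurable (X i) μ) (s : Finset ι) (w : ι → ℝ) (t : ℝ) :
    mgf (fun ω => ∑ i ∈ s, w i * X i ω) μ t = ∏ i ∈ s, mgf (X i) μ (w i * t) := by
  have hwX : iIndepFun (fun i ω => w i * X i ω) μ :=
    hindep.comp (fun i x => w i * x) fun i => measurable_const_mul _
  have h := hwX.mgf_sum₀ (t := t) (fun i => (hX i).const_mul (w i)) s
  simpa only [mgf_const_mul, Finset.sum_fn] using h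

theorem mem_integrableExpSet_sum_mul {ι : Type*} {X : ι → Ω → ℝ} (hindep : iIndepFun X μ)
    (hX : ∀ i, AEMeasurable (X i) μ) (s : Finset ι) {w : ι → ℝ} {t : ℝ}
    (hint : ∀ i ∈ s, w i * t ∈ integrableExpSet (X i) μ) :
    t ∈ integrableExpSet (fun ω => ∑ i ∈ s, w i * X i ω) μ := by
  have := hindep.isProbabilityMeasure
  -- `mgf` is `0` wherever the exponential is not integrable, so its positivity suffices.
  refine mgf_pos_iff.1 ?_
  rw [mgf_sum_mul hindep hX]
  exact Finset.prod_pos fun i hi => mgf_pos (hint i hi)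

theorem mgf_sum_mul_le {ι : Type*} {X : ι → Ω → ℝ} (hindep : iIndepFun X μ)
    (hX : ∀ i, AEMeasurable (X i) μ) (s : Finset ι) {w : ι → ℝ} {t C : ℝ}
    (hC : ∀ i ∈ s, mgf (X i) μ (w i * t) ≤ Real.exp (C * (w i * t) ^ 2)) :
    mgf (fun ω => ∑ i ∈ s, w i * X i ω) μ t ≤ Real.exp (C * t ^ 2 * ∑ i ∈ s, w i ^ 2) := by
  calc mgf (fun ω => ∑ i ∈ s, w i * X i ω) μ t
      = ∏ i ∈ s, mgf (X i) μ (w i * t) := mgf_sum_mul hindep hX s w t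
    _ ≤ ∏ i ∈ s, Real.exp (C * (w i * t) ^ 2) :=
        Finset.prod_le_prod (fun i _ => mgf_nonneg) hC
    _ = Real.exp (C * t ^ 2 * ∑ i ∈ s, w i ^ 2) := by
        rw [← Real.exp_sum, Finset.mul_sum]
        congr 1
        exact Finset.sum_congr rfl fun i _ => by ring

theorem mgf_eq_of_hasLaw {X : Ω → ℝ} {ν : Measure ℝ} (hX : HasLaw X ν μ) :
    mgf X μ = mgf id ν := by
  rw [← hX.map_eq, mgf_id_map hX.aemeasurable]

theorem integrable_of_tendsto_of_integral_norm_le {E : Type*} [NormedAddCommGroup E]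
    {f : ℕ → Ω → E} {g : Ω → E} {K : ℝ} (hf : ∀ n, Integrable (f n) μ)
    (hK : ∀ n, ∫ ω, ‖f n ω‖ ∂μ ≤ K)
    (hlim : ∀ᵐ ω ∂μ, Tendsto (fun n => f n ω) atTop (𝓝 (g ω))) : Integrable g μ := by
  refine ⟨aestronglyMeasurable_of_tendsto_ae atTop (fun n => (hf n).1) hlim, ?_⟩
  have h := Lp.eLpNorm_lim_le_liminf_eLpNorm (p := 1) (fun n => (hf n).1) g hlim
  simp only [eLpNorm_one_eq_lintegral_enorm] at h
  have hK' : ∀ n, ∫⁻ ω, ‖f n ω‖ₑ ∂μ ≤ ENNReal.ofReal K := fun n => by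
    rw [← ofReal_integral_norm_eq_lintegral_enorm (hf n)]
    exact ENNReal.ofReal_le_ofReal (hK n)
  calc ∫⁻ ω, ‖g ω‖ₑ ∂μ ≤ liminf (fun n => ∫⁻ ω, ‖f n ω‖ₑ ∂μ) atTop := h
    _ ≤ liminf (fun _ : ℕ => ENNReal.ofReal K) atTop :=
        liminf_le_liminf (Eventually.of_forall hK')
    _ = ENNReal.ofReal K := liminf_const _
    _ < ⊤ := ENNReal.ofReal_lt_top

theorem mem_integrableExpSet_of_tendsto {F : ℕ → Ω → ℝ} {H : Ω → ℝ} {t K : ℝ}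
    (hF : ∀ n, t ∈ integrableExpSet (F n) μ) (hK : ∀ n, mgf (F n) μ t ≤ K)
    (hlim : ∀ᵐ ω ∂μ, Tendsto (fun n => F n ω) atTop (𝓝 (H ω))) :
    t ∈ integrableExpSet H μ := by
  refine integrable_of_tendsto_of_integral_norm_le (K := K) hF (fun n => ?_)
    (hlim.mono fun ω hω => ?_)
  · simp only [Real.norm_of_nonneg (Real.exp_pos _).le]
    exact hK n
  · exact (Real.continuous_exp.tendsto _).comp (hω.const_mul t)

theorem measure_abs_ge_le_mgf_mul_exp [IsFiniteMeasure μ] {X : Ω → ℝ} {t : ℝ} (ht : 0 ≤ t)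
    (hpos : t ∈ integrableExpSet X μ) (hneg : -t ∈ integrableExpSet X μ) (s : ℝ) :
    μ {ω | s ≤ |X ω|} ≤ ENNReal.ofReal (mgf (fun ω => |X ω|) μ t * Real.exp (-t * s)) := by
  rw [← ofReal_measureReal, mul_comm]
  exact ENNReal.ofReal_le_ofReal (measure_ge_le_exp_mul_mgf s ht (integrable_exp_mul_abs hpos hneg))

end ExponentialMoments

section CayleyTree

variable {d : ℕ}

/-- The `x`-th child of a non-root vertex. -/
def child (v : Vertex d) (x : Fin d) : Vertex d := (v.1, v.2 ++ [x])

theorem mem_sphereW_succ {n : ℕ} {v : Vertex d} : v ∈ sphereW d (n + 1) ↔ vdepth v = n + 1 := by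
  simp only [sphereW, Nat.add_sub_cancel, Finset.mem_image, Finset.mem_univ, true_and, vdepth,
    Nat.add_right_cancel_iff]
  constructor
  · rintro ⟨x, rfl⟩
    exact List.length_ofFn
  · rintro rfl
    exact ⟨(v.1, v.2.get), Prod.ext rfl (List.ofFn_get v.2)⟩

theorem card_sphereW_succ (d n : ℕ) : #(sphereW d (n + 1)) = (d + 1) * d ^ n := by
  have hinj : Function.Injective fun x : Fin (d + 1) × (Fin n → Fin d) => (x.1, List.ofFn x.2) :=
    Function.injective_id.prodMap List.ofFn_injective
  simpa [sphereW] using Finset.card_image_of_injective Finset.univ hinj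

theorem sum_sphereW_add_two {M : Type*} [AddCommMonoid M] (n : ℕ) (G : Vertex d → M) :
    ∑ v ∈ sphereW d (n + 2), G v = ∑ v ∈ sphereW d (n + 1), ∑ x, G (child v x) := by
  rw [← Finset.sum_product']
  symm
  refine Finset.sum_bij (fun p _ => child p.1 p.2) (fun p hp => ?_) (fun p _ q _ h => ?_)
    (fun v hv => ?_) fun _ _ => rfl
  · have := mem_sphereW_succ.1 (Finset.mem_product.1 hp).1
    exact mem_sphereW_succ.2 (by simpa [vdepth, child] using this)
  · simp only [child, Prod.mk.injEq, List.append_singleton_inj] at h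
    exact Prod.ext (Prod.ext h.1 h.2.1) h.2.2
  · obtain ⟨a, l⟩ := v
    rw [mem_sphereW_succ, vdepth] at hv
    rcases l.eq_nil_or_concat' with rfl | ⟨l, x, rfl⟩
    · simp at hv
    · exact ⟨((a, l), x), by simpa [mem_sphereW_succ, vdepth] using hv, rfl⟩

variable {Ω : Type*} (Y : Vertex d → Ω → ℝ)

theorem heightAt_of_vdepth_eq_one {v : Vertex d} (hv : vdepth v = 1) (ω : Ω) :
    heightAt Y v ω = Y v ω := by
  obtain ⟨a, l⟩ := v
  obtain rfl : l = [] := List.length_eq_zero_iff.1 (Nat.succ_injective hv)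
  simp [heightAt]

theorem heightAt_child (v : Vertex d) (x : Fin d) (ω : Ω) :
    heightAt Y (child v x) ω = heightAt Y v ω + Y (child v x) ω := by
  simp only [heightAt, child, List.length_append, List.length_singleton]
  rw [Finset.sum_range_succ, List.take_of_length_le (by simp)]
  congr 1
  refine Finset.sum_congr rfl fun k hk => ?_
  rw [List.take_append_of_le_length (Finset.mem_range_succ_iff.1 hk)]

theorem sum_heightAt_sphereW_add_two (n : ℕ) (ω : Ω) :
    ∑ v ∈ sphereW d (n + 2), heightAt Y v ω =
      d * ∑ v ∈ sphereW d (n + 1), heightAt Y v ω + ∑ v ∈ sphereW d (n + 2), Y v ω := by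
  simp only [sum_sphereW_add_two, heightAt_child, Finset.sum_add_distrib, Finset.sum_const,
    Finset.card_univ, Fintype.card_fin, nsmul_eq_mul, Finset.mul_sum]

/-- The weight `|W_k|⁻¹` with which the increment at a vertex of depth `k` enters the spherical
averages of radius at least `k`. -/
def sphereWeight (v : Vertex d) : ℝ := (#(sphereW d (vdepth v)) : ℝ)⁻¹

theorem sphereWeight_eq {n : ℕ} {v : Vertex d} (hv : v ∈ sphereW d (n + 1)) :
    sphereWeight v = (((d + 1) * d ^ n : ℕ) : ℝ)⁻¹ := by
  rw [sphereWeight, mem_sphereW_succ.1 hv, card_sphereW_succ]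

theorem sphereWeight_nonneg (v : Vertex d) : 0 ≤ sphereWeight v :=
  inv_nonneg.2 (Nat.cast_nonneg _)

theorem sphereWeight_le (hd : d ≠ 0) (v : Vertex d) : sphereWeight v ≤ ((d : ℝ) + 1)⁻¹ := by
  rw [sphereWeight, vdepth, card_sphereW_succ]
  refine inv_anti₀ (by positivity) ?_
  exact_mod_cast Nat.le_mul_of_pos_right (d + 1) (pow_pos (Nat.pos_of_ne_zero hd) _)

theorem abs_sphereWeight_mul_le (hd : d ≠ 0) (v : Vertex d) (t : ℝ) :
    |sphereWeight v * t| ≤ |t| / ((d : ℝ) + 1) := by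
  rw [abs_mul, abs_of_nonneg (sphereWeight_nonneg v), div_eq_inv_mul]
  exact mul_le_mul_of_nonneg_right (sphereWeight_le hd v) (abs_nonneg t)

/-- The non-root vertices of depth at most `n`. -/
def ball (d n : ℕ) : Finset (Vertex d) := (range n).biUnion fun k => sphereW d (k + 1)

theorem sum_ball {M : Type*} [AddCommMonoid M] (n : ℕ) (G : Vertex d → M) :
    ∑ v ∈ ball d n, G v = ∑ k ∈ range n, ∑ v ∈ sphereW d (k + 1), G v := by
  refine Finset.sum_biUnion fun i _ j _ hij => Finset.disjoint_left.2 fun v hi hj => hij ?_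
  exact Nat.succ_injective ((mem_sphereW_succ.1 hi).symm.trans (mem_sphereW_succ.1 hj))

theorem sphAvg_add_two (hd : d ≠ 0) (n : ℕ) (ω : Ω) :
    sphAvg d Y (n + 2) ω =
      sphAvg d Y (n + 1) ω + ∑ v ∈ sphereW d (n + 2), sphereWeight v * Y v ω := by
  have hweight : ∑ v ∈ sphereW d (n + 2), sphereWeight v * Y v ω
      = (((d + 1) * d ^ (n + 1) : ℕ) : ℝ)⁻¹ * ∑ v ∈ sphereW d (n + 2), Y v ω := by
    rw [Finset.mul_sum]
    exact Finset.sum_congr rfl fun v hv => by rw [sphereWeight_eq hv]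
  rw [hweight, sphAvg, sphAvg, sum_heightAt_sphereW_add_two, mul_add]
  congr 1
  simp only [Nat.add_succ_sub_one, pow_succ]
  push_cast
  field_simp
  ring

theorem sphAvg_succ_eq_sum_ball (hd : d ≠ 0) (n : ℕ) (ω : Ω) :
    sphAvg d Y (n + 1) ω = ∑ v ∈ ball d (n + 1), sphereWeight v * Y v ω := by
  rw [sum_ball]
  induction n with
  | zero =>
    rw [sphAvg, Finset.sum_range_one, Finset.mul_sum]
    refine Finset.sum_congr rfl fun v hv => ?_
    rw [sphereWeight_eq hv, heightAt_of_vdepth_eq_one Y (mem_sphereW_succ.1 hv)]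
  | succ n ih => rw [sphAvg_add_two Y hd, ih, Finset.sum_range_succ _ (n + 1)]

theorem sum_sphereWeight_sq_sphereW_le (hd : 2 ≤ d) (k : ℕ) :
    ∑ v ∈ sphereW d (k + 1), sphereWeight v ^ 2 ≤ (1 / 2) ^ k := by
  calc ∑ v ∈ sphereW d (k + 1), sphereWeight v ^ 2
      = ∑ v ∈ sphereW d (k + 1), ((#(sphereW d (k + 1)) : ℝ)⁻¹) ^ 2 :=
        Finset.sum_congr rfl fun v hv => by rw [sphereWeight, mem_sphereW_succ.1 hv]
    _ = (((d + 1) * d ^ k : ℕ) : ℝ)⁻¹ := by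
        rw [card_sphereW_succ, Finset.sum_const, card_sphereW_succ, nsmul_eq_mul]
        field_simp
    _ ≤ ((2 ^ k : ℕ) : ℝ)⁻¹ := by
        refine inv_anti₀ (by positivity) (Nat.cast_le.2 ?_)
        exact (Nat.pow_le_pow_left hd k).trans (Nat.le_mul_of_pos_left _ d.succ_pos)
    _ = (1 / 2) ^ k := by push_cast; rw [one_div, inv_pow]

theorem sum_sphereWeight_sq_ball_le (hd : 2 ≤ d) (n : ℕ) :
    ∑ v ∈ ball d n, sphereWeight v ^ 2 ≤ 2 := by
  rw [sum_ball]
  exact (Finset.sum_le_sum fun k _ => sum_sphereWeight_sq_sphereW_le hd k).trans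
    (sum_geometric_two_le n)

end CayleyTree

section LimitTail

variable {Ω : Type*} {mΩ : MeasurableSpace Ω} {P : Measure Ω} {d : ℕ} {ν : Measure ℝ}
  {X : Vertex d → Ω → ℝ}

theorem mem_integrableExpSet_sphAvg_succ (hd : d ≠ 0) {β : ℝ}
    (hβ : Set.Ioo (-β) β ⊆ integrableExpSet id ν) (hlaw : ∀ v, HasLaw (X v) ν P)
    (hindep : iIndepFun X P) {t : ℝ} (ht : |t| < (d + 1) * β) (n : ℕ) :
    t ∈ integrableExpSet (sphAvg d X (n + 1)) P := by
  have := hindep.isProbabilityMeasure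
  rw [funext (sphAvg_succ_eq_sum_ball X hd n)]
  refine mem_integrableExpSet_sum_mul hindep (fun v => (hlaw v).aemeasurable) _ fun v _ => ?_
  rw [integrableExpSet_eq_of_mgf (mgf_eq_of_hasLaw (hlaw v))]
  exact hβ (abs_lt.1 ((abs_sphereWeight_mul_le hd v t).trans_lt
    ((div_lt_iff₀' (by positivity)).2 ht)))

theorem exists_mgf_sphAvg_succ_le (hd : 2 ≤ d) {β : ℝ}
    (hβ : Set.Ioo (-β) β ⊆ integrableExpSet id ν) (hν : ∫ x, x ∂ν = 0)
    (hlaw : ∀ v, HasLaw (X v) ν P) (hindep : iIndepFun X P) {t : ℝ} (ht : |t| < (d + 1) * β) :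
    ∃ K, ∀ n, mgf (sphAvg d X (n + 1)) P t ≤ K := by
  have hP : IsProbabilityMeasure P := hindep.isProbabilityMeasure
  have hν_prob : IsProbabilityMeasure ν := (hlaw (0, [])).isProbabilityMeasure_iff.1 hP
  obtain ⟨C, hC⟩ := exists_mgf_le_exp_mul_sq (X := id) hν ((div_lt_iff₀' (by positivity)).2 ht) hβ
  refine ⟨Real.exp (|C| * t ^ 2 * 2), fun n => ?_⟩
  calc mgf (sphAvg d X (n + 1)) P t
      = mgf (fun ω => ∑ v ∈ ball d (n + 1), sphereWeight v * X v ω) P t := by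
        rw [funext (sphAvg_succ_eq_sum_ball X (by omega) n)]
    _ ≤ Real.exp (C * t ^ 2 * ∑ v ∈ ball d (n + 1), sphereWeight v ^ 2) :=
        mgf_sum_mul_le hindep (fun v => (hlaw v).aemeasurable) _ fun v _ => by
          rw [mgf_eq_of_hasLaw (hlaw v)]
          exact hC _ (abs_sphereWeight_mul_le (by omega) v t)
    _ ≤ Real.exp (|C| * t ^ 2 * 2) := by
        gcongr
        · exact le_abs_self C
        · exact sum_sphereWeight_sq_ball_le hd _

theorem sos_limit_exponential_tail_general (hd : 2 ≤ d) {β : ℝ}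
    (hβ : Set.Ioo (-β) β ⊆ integrableExpSet id ν) (hν : ∫ x, x ∂ν = 0)
    (hlaw : ∀ v, HasLaw (X v) ν P) (hindep : iIndepFun X P) {H : Ω → ℝ}
    (hH : ∀ᵐ ω ∂P, Tendsto (fun r => sphAvg d X r ω) atTop (𝓝 (H ω)))
    {A : ℝ} (hA : 0 ≤ A) (hAβ : A < (d + 1) * β) :
    ∃ B : ℝ, 0 ≤ B ∧ ∀ s : ℝ, P {ω | s ≤ |H ω|} ≤ ENNReal.ofReal (B * Real.exp (-A * s)) := by
  have hP : IsProbabilityMeasure P := hindep.isProbabilityMeasure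
  have hint : ∀ t : ℝ, |t| = A → t ∈ integrableExpSet H P := fun t ht => by
    obtain ⟨K, hK⟩ := exists_mgf_sphAvg_succ_le hd hβ hν hlaw hindep (ht.trans_lt hAβ)
    exact mem_integrableExpSet_of_tendsto
      (mem_integrableExpSet_sphAvg_succ (by omega) hβ hlaw hindep (ht.trans_lt hAβ)) hK
      (hH.mono fun ω hω => (tendsto_add_atTop_iff_nat 1).2 hω)
  exact ⟨mgf (fun ω => |H ω|) P A, mgf_nonneg, measure_abs_ge_le_mgf_mul_exp hA
    (hint A (abs_of_nonneg hA)) (hint (-A) ((abs_neg A).trans (abs_of_nonneg hA)))⟩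

end LimitTail

section SOSLaw

theorem summable_exp_neg_mul_abs_int {c : ℝ} (hc : 0 < c) :
    Summable fun j : ℤ => Real.exp (-c * |(j : ℝ)|) := by
  have h : Summable fun n : ℕ => Real.exp (-c * (n : ℝ)) := by
    simpa only [mul_comm] using Real.summable_exp_nat_mul_iff.2 (neg_lt_zero.2 hc)
  refine Summable.of_nat_of_neg ?_ ?_ <;> simpa using h

/-- The SOS increment probability mass function on `ℤ`, real valued; for `β ≤ 0` the normalising
series diverges and the function is `0`. -/
def sosPMFReal (β : ℝ) (j : ℤ) : ℝ :=
  Real.exp (-β * |(j : ℝ)|) / ∑' k : ℤ, Real.exp (-β * |(k : ℝ)|)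

theorem sosPMFReal_nonneg (β : ℝ) (j : ℤ) : 0 ≤ sosPMFReal β j :=
  div_nonneg (Real.exp_pos _).le (tsum_nonneg fun _ => (Real.exp_pos _).le)

/-- The SOS increment law, as a measure on the real line carried by the integers. -/
def sosLaw (β : ℝ) : Measure ℝ :=
  Measure.sum fun j : ℤ => ENNReal.ofReal (sosPMFReal β j) • Measure.dirac (j : ℝ)

theorem hasLaw_sosLaw {Ω : Type*} {mΩ : MeasurableSpace Ω} {P : Measure Ω} {β : ℝ} {Y : Ω → ℤ}
    (hY : Measurable Y) (hlaw : ∀ j : ℤ, P {ω | Y ω = j} = ENNReal.ofReal (sosPMFReal β j)) :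
    HasLaw (fun ω => (Y ω : ℝ)) (sosLaw β) P where
  aemeasurable := by fun_prop
  map_eq := by
    have hcast : Measurable ((↑) : ℤ → ℝ) := by fun_prop
    have hmap : P.map Y =
        Measure.sum fun j => ENNReal.ofReal (sosPMFReal β j) • Measure.dirac j := by
      rw [Measure.map_eq_sum P Y hY]
      exact congrArg Measure.sum (funext fun j => congrArg (· • Measure.dirac j) (hlaw j))
    change P.map (((↑) : ℤ → ℝ) ∘ Y) = _
    rw [← Measure.map_map hcast hY, hmap, Measure.map_sum hcast.aemeasurable, sosLaw]
    simp only [Measure.map_smul, Measure.map_dirac' hcast]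

theorem integral_id_sosLaw (β : ℝ) : ∫ x, x ∂sosLaw β = 0 := by
  have hodd : ∑' j : ℤ, sosPMFReal β j * (j : ℝ) = -∑' j : ℤ, sosPMFReal β j * (j : ℝ) := by
    rw [← tsum_neg, ← (Equiv.neg ℤ).tsum_eq]
    simp [sosPMFReal]
  rw [sosLaw, integral_sum_dirac fun _ => ENNReal.ofReal_ne_top]
  simp only [ENNReal.toReal_ofReal (sosPMFReal_nonneg β _), smul_eq_mul]
  linarith

theorem summable_sosPMFReal_mul_exp {β t : ℝ} (ht : |t| < β) :
    Summable fun j : ℤ => sosPMFReal β j * Real.exp (t * j) := by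
  have hdecay : Summable fun j : ℤ =>
      Real.exp (-(β - |t|) * |(j : ℝ)|) / ∑' k : ℤ, Real.exp (-β * |(k : ℝ)|) :=
    (summable_exp_neg_mul_abs_int (sub_pos.2 ht)).div_const _
  refine .of_nonneg_of_le (fun j => mul_nonneg (sosPMFReal_nonneg β j) (Real.exp_pos _).le)
    (fun j => ?_) hdecay
  rw [sosPMFReal, div_mul_eq_mul_div, ← Real.exp_add]
  gcongr
  linarith [le_abs_self (t * j), abs_mul t (j : ℝ)]

theorem Ioo_subset_integrableExpSet_sosLaw (β : ℝ) :
    Set.Ioo (-β) β ⊆ integrableExpSet id (sosLaw β) := fun t ht => by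
  refine integrable_sum_dirac (fun _ => ENNReal.ofReal_ne_top) ?_
  simpa only [ENNReal.toReal_ofReal (sosPMFReal_nonneg β _),
    Real.norm_of_nonneg (Real.exp_pos _).le, id] using summable_sosPMFReal_mul_exp (abs_lt.2 ht)

end SOSLaw

/-- For the free height field with SOS increment law
`p(j) = e^{-β|j|}/Z`, the a.s. limit `H` of the spherical averages satisfies
`P(|H| ≥ s) ≤ B(A) e^{-As}` for every `0 < A < (d+1)β`. -/
theorem sos_limit_exponential_tail
    {Ω : Type} [MeasurableSpace Ω] (P : Measure Ω) [IsProbabilityMeasure P]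
    (d : ℕ) (hd : 2 ≤ d)
    (β : ℝ) (hβ : 0 < β)
    (p : ℤ → ℝ)
    (hp : ∀ j : ℤ, p j = Real.exp (-β * |(j : ℝ)|) / ∑' k : ℤ, Real.exp (-β * |(k : ℝ)|))
    (Y : Vertex d → Ω → ℤ) (hmeas : ∀ v, Measurable (Y v))
    (hindep : iIndepFun Y P)
    (hlaw : ∀ v (j : ℤ), P {ω | Y v ω = j} = ENNReal.ofReal (p j))
    (H : Ω → ℝ) (hHmeas : Measurable H)
    (hH : ∀ᵐ ω ∂P, Tendsto (fun r => sphAvg d (fun v ω => (Y v ω : ℝ)) r ω) atTop (𝓝 (H ω))) :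
    ∀ A : ℝ, 0 < A → A < ((d : ℝ) + 1) * β →
      ∃ B : ℝ, 0 ≤ B ∧ ∀ s : ℝ, 0 ≤ s →
        P {ω | s ≤ |H ω|} ≤ ENNReal.ofReal (B * Real.exp (-A * s)) := by
  intro A hA hAβ
  obtain rfl : p = sosPMFReal β := funext hp
  obtain ⟨B, hB, htail⟩ := sos_limit_exponential_tail_general hd
    (Ioo_subset_integrableExpSet_sosLaw β) (integral_id_sosLaw β)
    (fun v => hasLaw_sosLaw (hmeas v) (hlaw v))
    (hindep.comp (fun _ => ((↑) : ℤ → ℝ)) fun _ => measurable_from_top) hH hA.le hAβ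
  exact ⟨B, hB, fun s _ => htail s⟩
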